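/- arXiv:1206.2568 — 2 statements merged into one kernel-verified Lean document; each statement's English description precedes it below -/
import Mathlib

section
/- Let G = (L, R, E) be a Tanner graph on n left vertices in which every left vertex has degree exactly c, let ε > 2/3 be such that εc is an integer, and let U ⊆ L. Define Û = { i ∈ L \ U : |N(i) ∩ N(U)| ≥ (2ε−1)c } and U' = U ∪ Û. If there exists an (εc)-matching M with respect to U', then there exists a feasible edge-weight assignment with respect to U. -/
open Finset

/-- The set of right-neighbors of the left (variable) node `i`. -/
def leftNbrs {n : ℕ} {R : Type*} [Fintype R] [DecidableEq R]
    (E : Finset (Fin n × R)) (i : Fin n) : Finset R :=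
  Finset.univ.filter fun j => (i, j) ∈ E

/-- The set of left-neighbors of the right (check) node `j`. -/
def rightNbrs {n : ℕ} {R : Type*} [Fintype R] [DecidableEq R]
    (E : Finset (Fin n × R)) (j : R) : Finset (Fin n) :=
  Finset.univ.filter fun i => (i, j) ∈ E

/-- `N(S)`: the set of (right) neighbors of a set `S` of left vertices. -/
def nbrSet {n : ℕ} {R : Type*} [Fintype R] [DecidableEq R]
    (E : Finset (Fin n × R)) (S : Finset (Fin n)) : Finset R :=
  S.biUnion (leftNbrs E)

/-- `M` is a matching: every right vertex is incident to at most one edge. -/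
def IsMatching {n : ℕ} {R : Type*} (M : Finset (Fin n × R)) : Prop :=
  ∀ j : R, ∀ i i' : Fin n, (i, j) ∈ M → (i', j) ∈ M → i = i'

/-- `M` is a `q`-matching with respect to `U`: `M` is a matching and every
`u ∈ U` is incident to at least `q` edges of `M`. -/
def IsQMatching {n : ℕ} {R : Type*} [Fintype R] [DecidableEq R]
    (M : Finset (Fin n × R)) (U : Finset (Fin n)) (q : ℕ) : Prop :=
  IsMatching M ∧ ∀ u ∈ U, q ≤ (Finset.univ.filter fun j : R => (u, j) ∈ M).card

/-- Feasible edge-weight assignment with respect to `U`. -/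
def FeasibleWeights {n : ℕ} {R : Type*} [Fintype R] [DecidableEq R]
    (E : Finset (Fin n × R)) (U : Finset (Fin n)) (τ : Fin n × R → ℝ) : Prop :=
  (∀ j : R, ∀ i ∈ rightNbrs E j, ∀ i' ∈ rightNbrs E j, i ≠ i' →
      0 ≤ τ (i, j) + τ (i', j)) ∧
  ∀ i : Fin n, (∑ j ∈ leftNbrs E i, τ (i, j)) < (if i ∈ U then (-1 : ℝ) else 1)

/-!
Let `T` be the set of checks that `M` matches to `U`. Give the edges at checks outside `T` weight
`0`; at a check of `T`, give the matched edge weight `-x` and all other edges weight `x`. At most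
one edge at each check is negative, which makes pair sums nonnegative. A vertex `i` has total weight
`x (|N(i) ∩ T| - 2 m)`, where `m` counts its matched edges into `T`. With `k = εc`, it is at most
`-x (2k - c)` on `U`. Off `U` it equals `x |N(i) ∩ T|`, and `|N(i) ∩ T| < 2k - c`: on `Û` because
`k` edges are used up by checks outside `T` and `c - k < 2k - c`, elsewhere because `T ⊆ N(U)`.
Hence `1 / x` can be chosen just below `2k - c`.
-/

section

variable {n : ℕ} {R : Type*} [Fintype R] [DecidableEq R] {E M : Finset (Fin n × R)}
  {U : Finset (Fin n)} {i : Fin n} {j : R}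

theorem mem_leftNbrs : j ∈ leftNbrs E i ↔ (i, j) ∈ E := by
  simp [leftNbrs]

theorem leftNbrs_mono (hME : M ⊆ E) (i : Fin n) : leftNbrs M i ⊆ leftNbrs E i :=
  fun _ hj => mem_leftNbrs.2 (hME (mem_leftNbrs.1 hj))

theorem nbrSet_mono (hME : M ⊆ E) (U : Finset (Fin n)) : nbrSet M U ⊆ nbrSet E U :=
  biUnion_mono fun i _ => leftNbrs_mono hME i

theorem leftNbrs_subset_nbrSet (hi : i ∈ U) : leftNbrs E i ⊆ nbrSet E U :=
  subset_biUnion_of_mem (leftNbrs E) hi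

theorem IsMatching.disjoint_leftNbrs_nbrSet (hM : IsMatching M) (hi : i ∉ U) :
    Disjoint (leftNbrs M i) (nbrSet M U) := by
  refine (disjoint_biUnion_right _ _ _).2 fun u hu => disjoint_left.2 fun j hij huj => hi ?_
  rwa [hM j i u (mem_leftNbrs.1 hij) (mem_leftNbrs.1 huj)]

theorem IsMatching.card_inter_nbrSet_add_card_le (hM : IsMatching M) (hME : M ⊆ E) (hi : i ∉ U) :
    #(leftNbrs E i ∩ nbrSet M U) + #(leftNbrs M i) ≤ #(leftNbrs E i) := by
  have hdisj : Disjoint (leftNbrs E i ∩ nbrSet M U) (leftNbrs M i) :=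
    (hM.disjoint_leftNbrs_nbrSet hi).symm.mono_left inter_subset_right
  rw [← card_union_of_disjoint hdisj]
  exact card_le_card (union_subset inter_subset_left (leftNbrs_mono hME i))

/-- The edge weights of size `x` induced by a matching `M` and a set `U` of left vertices: only the
checks in `nbrSet M U`, which `M` matches to `U`, carry weight; there the edges of `M` are negative
and all other edges are positive. -/
def matchingWeight (M : Finset (Fin n × R)) (U : Finset (Fin n)) (x : ℝ) (e : Fin n × R) : ℝ :=
  if e.2 ∈ nbrSet M U then if e ∈ M then -x else x else 0

theorem IsMatching.matchingWeight_add_nonneg (hM : IsMatching M) {x : ℝ} (hx : 0 ≤ x)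
    {i i' : Fin n} (hii' : i ≠ i') (j : R) :
    0 ≤ matchingWeight M U x (i, j) + matchingWeight M U x (i', j) := by
  have hnotMem : (i, j) ∈ M → (i', j) ∉ M := fun h h' => hii' (hM j i i' h h')
  by_cases hj : j ∈ nbrSet M U <;> by_cases hij : (i, j) ∈ M <;> by_cases hij' : (i', j) ∈ M <;>
    simp_all [matchingWeight]

theorem sum_leftNbrs_matchingWeight (hME : M ⊆ E) (x : ℝ) (i : Fin n) :
    ∑ j ∈ leftNbrs E i, matchingWeight M U x (i, j) =
      x * (#(leftNbrs E i ∩ nbrSet M U) - 2 * #(leftNbrs M i ∩ nbrSet M U)) := by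
  have hweight (j : R) : matchingWeight M U x (i, j) =
      x * ((if j ∈ nbrSet M U then 1 else 0) -
        2 * if j ∈ leftNbrs M i ∩ nbrSet M U then 1 else 0) := by
    by_cases hj : j ∈ nbrSet M U <;> by_cases hij : (i, j) ∈ M <;>
      norm_num [matchingWeight, mem_leftNbrs, hj, hij]
  have hinter : leftNbrs E i ∩ (leftNbrs M i ∩ nbrSet M U) = leftNbrs M i ∩ nbrSet M U :=
    inter_eq_right.2 (inter_subset_left.trans (leftNbrs_mono hME i))
  simp only [hweight, ← mul_sum, sum_sub_distrib, sum_boole, filter_mem_eq_inter, hinter]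

theorem IsMatching.feasibleWeights_matchingWeight (hM : IsMatching M) (hME : M ⊆ E) {D : ℝ}
    (hD : 0 < D) (hU : ∀ i ∈ U, #(leftNbrs E i ∩ nbrSet M U) + D < 2 * #(leftNbrs M i))
    (hUc : ∀ i ∉ U, #(leftNbrs E i ∩ nbrSet M U) < D) :
    FeasibleWeights E U (matchingWeight M U D⁻¹) := by
  refine ⟨fun j i _ i' _ hii' => hM.matchingWeight_add_nonneg (inv_nonneg.2 hD.le) hii' j,
    fun i => ?_⟩
  rw [sum_leftNbrs_matchingWeight hME, inv_mul_lt_iff₀ hD]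
  split_ifs with hi
  · rw [inter_eq_left.2 (leftNbrs_subset_nbrSet hi)]
    linarith [hU i hi]
  · rw [disjoint_iff_inter_eq_empty.1 (hM.disjoint_leftNbrs_nbrSet hi), card_empty]
    simpa using hUc i hi

theorem IsMatching.exists_feasibleWeights (hM : IsMatching M) (hME : M ⊆ E) {t : ℕ} (ht : 0 < t)
    (hU : ∀ i ∈ U, #(leftNbrs E i ∩ nbrSet M U) + t ≤ 2 * #(leftNbrs M i))
    (hUc : ∀ i ∉ U, #(leftNbrs E i ∩ nbrSet M U) < t) :
    ∃ τ : Fin n × R → ℝ, FeasibleWeights E U τ := by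
  refine ⟨_, hM.feasibleWeights_matchingWeight hME (D := t - 1 / 2) ?_ (fun i hi => ?_)
    fun i hi => ?_⟩
  · have : (1 : ℝ) ≤ t := mod_cast ht
    linarith
  · have : (#(leftNbrs E i ∩ nbrSet M U) : ℝ) + t ≤ 2 * #(leftNbrs M i) := mod_cast hU i hi
    linarith
  · have : (#(leftNbrs E i ∩ nbrSet M U) : ℝ) + 1 ≤ t := mod_cast hUc i hi
    linarith

theorem matching_gives_feasible_weights_general {c k : ℕ} (hck : 2 * c < 3 * k)
    {U' : Finset (Fin n)} (hUU' : U ⊆ U') (hdeg : ∀ i ∈ U', #(leftNbrs E i) ≤ c)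
    (hU' : ∀ i ∉ U', #(leftNbrs E i ∩ nbrSet E U) + c < 2 * k)
    (hME : M ⊆ E) (hM : IsQMatching M U' k) :
    ∃ τ : Fin n × R → ℝ, FeasibleWeights E U τ := by
  have hmatched : ∀ i ∈ U', k ≤ #(leftNbrs M i) := hM.2
  refine hM.1.exists_feasibleWeights hME (t := 2 * k - c) (by lia) (fun i hi => ?_) fun i hi => ?_
  · have hle_deg : #(leftNbrs E i ∩ nbrSet M U) ≤ #(leftNbrs E i) := card_le_card inter_subset_left
    have := hdeg i (hUU' hi)
    have := hmatched i (hUU' hi)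
    lia
  · by_cases hi' : i ∈ U'
    · have := hM.1.card_inter_nbrSet_add_card_le hME hi
      have := hdeg i hi'
      have := hmatched i hi'
      lia
    · have hle_nbrSet : #(leftNbrs E i ∩ nbrSet M U) ≤ #(leftNbrs E i ∩ nbrSet E U) :=
        card_le_card (inter_subset_inter_left (nbrSet_mono hME U))
      have := hU' i hi'
      lia

end

/-- Proposition: if every left vertex has degree `c`, `ε > 2/3`, `εc ∈ ℤ`,
`Û = { i ∉ U : |N(i) ∩ N(U)| ≥ (2ε−1)c }`, `U' = U ∪ Û`, and there exists an
`(εc)`-matching with respect to `U'`, then there is a feasible edge-weight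
assignment with respect to `U`. -/
theorem matching_gives_feasible_weights {R : Type*} [Fintype R] [DecidableEq R]
    (n c : ℕ) (ε : ℝ) (E : Finset (Fin n × R))
    (hreg : ∀ i : Fin n, (leftNbrs E i).card = c)
    (hc : 0 < c) (hε : 2 / 3 < ε) (k : ℕ) (hk : (k : ℝ) = ε * c)
    (U Uhat : Finset (Fin n))
    (hUhat : ∀ i : Fin n, i ∈ Uhat ↔
      i ∉ U ∧ (2 * ε - 1) * c ≤ ((leftNbrs E i ∩ nbrSet E U).card : ℝ))
    (M : Finset (Fin n × R)) (hME : M ⊆ E)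
    (hM : IsQMatching M (U ∪ Uhat) k) :
    ∃ τ : Fin n × R → ℝ, FeasibleWeights E U τ := by
  have hck : (2 * c : ℝ) < 3 * k := by
    linarith [mul_lt_mul_of_pos_right hε (Nat.cast_pos.2 hc : (0 : ℝ) < c)]
  refine matching_gives_feasible_weights_general (mod_cast hck) subset_union_left
    (fun i _ => (hreg i).le) (fun i hi => ?_) hME hM
  obtain ⟨hiU, hiUhat⟩ := notMem_union.1 hi
  have hlt : ((leftNbrs E i ∩ nbrSet E U).card : ℝ) < (2 * ε - 1) * c :=
    not_le.1 fun hle => hiUhat ((hUhat i).2 ⟨hiU, hle⟩)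
  have : ((leftNbrs E i ∩ nbrSet E U).card : ℝ) + c < 2 * k := by linarith
  exact_mod_cast this
end

section
/- (Expansion beyond δn.) Let G = (L, R, E) be a (c, ε, δ)-expander Tanner graph on n left vertices with ε > 1/2, and suppose δn is an integer. Then every subset S ⊆ L with δn < |S| ≤ 2εδn satisfies |N¹(S)| ≥ 2εδcn − c·|S|, where N¹(S) is the set of unique neighbors of S. -/
open Finset

/-- `N¹(S)`: the set of unique neighbors of a set `S` of left vertices. -/
def uniqueNbrs {n : ℕ} {R : Type*} [Fintype R] [DecidableEq R]
    (E : Finset (Fin n × R)) (S : Finset (Fin n)) : Finset R :=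
  Finset.univ.filter fun j => (rightNbrs E j ∩ S).card = 1

/-- `G = ([n], R, E)` is a `(c, ε, δ)`-expander. -/
def IsExpander {R : Type*} [Fintype R] [DecidableEq R] (n c : ℕ) (ε δ : ℝ)
    (E : Finset (Fin n × R)) : Prop :=
  (∀ i : Fin n, (leftNbrs E i).card = c) ∧
  ∀ S : Finset (Fin n), (S.card : ℝ) ≤ δ * n →
    ε * c * S.card ≤ ((nbrSet E S).card : ℝ)

/-!
In a neighborhood `N(S)` every vertex that is not a unique neighbor absorbs at least two of the
edges leaving `S`, so `2|N(S)| ≤ c|S| + |N¹(S)|`. Beyond `δn` the expansion of `S` itself is not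
available, but `N(S)` contains the neighborhood of a subset of `S` of size exactly `δn`.
-/

section DoubleCounting

variable {n : ℕ} {R : Type*} [Fintype R] [DecidableEq R]

theorem nbrSet_mono_s7 (E : Finset (Fin n × R)) : Monotone (nbrSet E) :=
  fun _ _ hST => biUnion_subset_biUnion_of_subset_left _ hST

theorem rightNbrs_inter_eq_bipartiteBelow (E : Finset (Fin n × R)) (S : Finset (Fin n)) (j : R) :
    rightNbrs E j ∩ S = S.bipartiteBelow (fun i j => (i, j) ∈ E) j := by
  rw [rightNbrs, filter_inter, univ_inter, bipartiteBelow]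

theorem mem_nbrSet_iff_rightNbrs_inter_nonempty {E : Finset (Fin n × R)} {S : Finset (Fin n)}
    {j : R} : j ∈ nbrSet E S ↔ (rightNbrs E j ∩ S).Nonempty := by
  simp only [rightNbrs_inter_eq_bipartiteBelow, Finset.Nonempty, mem_bipartiteBelow, nbrSet,
    mem_biUnion, leftNbrs, mem_filter_univ]

theorem sum_card_rightNbrs_inter (E : Finset (Fin n × R)) (S : Finset (Fin n)) :
    ∑ j, (rightNbrs E j ∩ S).card = ∑ i ∈ S, (leftNbrs E i).card := by
  simp only [rightNbrs_inter_eq_bipartiteBelow]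
  exact (sum_card_bipartiteAbove_eq_sum_card_bipartiteBelow _).symm

theorem two_mul_card_nbrSet_le_sum_add (E : Finset (Fin n × R)) (S : Finset (Fin n)) :
    2 * (nbrSet E S).card ≤ ∑ i ∈ S, (leftNbrs E i).card + (uniqueNbrs E S).card := by
  have card_nbrSet : (nbrSet E S).card = ∑ j, if 0 < (rightNbrs E j ∩ S).card then 1 else 0 := by
    simp only [card_pos, ← mem_nbrSet_iff_rightNbrs_inter_nonempty, ← card_filter,
      filter_univ_mem]
  have card_uniqueNbrs :
      (uniqueNbrs E S).card = ∑ j, if (rightNbrs E j ∩ S).card = 1 then 1 else 0 :=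
    card_filter _ _
  rw [card_nbrSet, card_uniqueNbrs, ← sum_card_rightNbrs_inter, mul_sum, ← sum_add_distrib]
  refine sum_le_sum fun j _ => ?_
  split_ifs <;> omega

end DoubleCounting

namespace IsExpander

variable {R : Type*} [Fintype R] [DecidableEq R] {n c k : ℕ} {ε δ : ℝ} {E : Finset (Fin n × R)}
  {S : Finset (Fin n)}

theorem two_mul_card_nbrSet_le (hE : IsExpander n c ε δ E) (S : Finset (Fin n)) :
    2 * (nbrSet E S).card ≤ c * S.card + (uniqueNbrs E S).card := by
  have edge_count : ∑ i ∈ S, (leftNbrs E i).card = c * S.card := by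
    rw [sum_const_nat fun i _ => hE.1 i, mul_comm]
  exact edge_count ▸ two_mul_card_nbrSet_le_sum_add E S

theorem mul_le_card_nbrSet (hE : IsExpander n c ε δ E) (hk : (k : ℝ) ≤ δ * n)
    (hkS : k ≤ S.card) : ε * c * k ≤ ((nbrSet E S).card : ℝ) := by
  obtain ⟨T, hTS, rfl⟩ := exists_subset_card_eq hkS
  calc ε * c * T.card ≤ (nbrSet E T).card := hE.2 T hk
    _ ≤ (nbrSet E S).card := mod_cast card_le_card (nbrSet_mono_s7 E hTS)

end IsExpander

/-- For `ε ≥ 0` and `δ ≥ 0` the best choice is `k = min ⌊δn⌋ |S|`. -/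
theorem expansion_beyond_deltaN_general {R : Type*} [Fintype R] [DecidableEq R]
    {n c k : ℕ} {ε δ : ℝ} {E : Finset (Fin n × R)} {S : Finset (Fin n)}
    (hE : IsExpander n c ε δ E) (hk : (k : ℝ) ≤ δ * n) (hkS : k ≤ S.card) :
    2 * ε * c * k - c * S.card ≤ ((uniqueNbrs E S).card : ℝ) := by
  have expansion : ε * c * k ≤ ((nbrSet E S).card : ℝ) := hE.mul_le_card_nbrSet hk hkS
  have double_count : 2 * ((nbrSet E S).card : ℝ) ≤ c * S.card + (uniqueNbrs E S).card :=
    mod_cast hE.two_mul_card_nbrSet_le S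
  linarith

/-- Expansion beyond `δn`: if `G` is a `(c, ε, δ)`-expander with `ε > 1/2` and
`δn ∈ ℤ`, then every `S ⊆ L` with `δn < |S| ≤ 2εδn` satisfies
`|N¹(S)| ≥ 2εδcn − c|S|`. -/
theorem expansion_beyond_deltaN {R : Type*} [Fintype R] [DecidableEq R]
    (n c : ℕ) (ε δ : ℝ) (E : Finset (Fin n × R))
    (hε : 1 / 2 < ε) (hδ : 0 < δ)
    (m : ℕ) (hm : (m : ℝ) = δ * n)
    (hexp : IsExpander n c ε δ E)
    (S : Finset (Fin n)) (hS₁ : δ * n < (S.card : ℝ))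
    (hS₂ : (S.card : ℝ) ≤ 2 * ε * δ * n) :
    2 * ε * δ * c * n - c * S.card ≤ ((uniqueNbrs E S).card : ℝ) := by
  have hmS : m ≤ S.card := mod_cast (hm.trans_lt hS₁).le
  linear_combination expansion_beyond_deltaN_general hexp hm.le hmS - 2 * ε * c * hm
end
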